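/- arXiv:2105.06359 — 2 statements merged into one kernel-verified Lean document; each statement's English description precedes it below -/
import Mathlib

section
/- Let N ≥ 1, let φ: ℝ^{N+1} → [0,∞) be a surface tension of class C² on ℝ^{N+1}\{0}, and let ψ: ℝ^{N+1} → [0,∞) be continuous with ψ(p) > 0 for p ≠ 0. Let f: ℝ × (0,∞) → ℝ be such that f(·,t) is ℤ-periodic for every t, let u(x,t) := f(x·e₁, t), and assume u is of class C² on ℝ^N × (0,∞) and is a classical solution of the anisotropic graphical flow ∂_t u + ψ(−∇u,1)·A_φ[u] = 0. Let t₁ > 0 and L > 0 be such that |∇u(x,t)| ≤ L for all x ∈ ℝ^N and t ≥ t₁. Then ∫_{t₁}^{∞} ∫_{[0,1]^N} (∂_t u(x,t))² dx dt ≤ (max_{|ξ| ≤ L} ψ(−ξ,1)) · ∫_{[0,1]^N} φ(−∇u(x,t₁),1) dx; in particular this integral is finite. -/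
/-!
Since `u(x, t) = f(x·e₁, t)`, the flow is an equation in one space variable. With
`Φ(s) = φ(-s e₁, 1)` and `Ψ(s) = ψ(-s e₁, 1)` one has `A_φ[u] = -∂ᵣ(Φ'(∂ᵣf))` (`Aop_coord`), so
that `∂ₜf = Ψ(∂ᵣf) ∂ᵣ(Φ'(∂ᵣf))`. `Φ` is of class `C²` because the line `s ↦ (-s e₁, 1)` avoids the
origin.

The energy `E(t) = ∫₀¹ Φ(∂ᵣf) dr` is dissipated: by periodicity,
`E' = ∫ Φ'(∂ᵣf) ∂ₜ∂ᵣf = -∫ ∂ᵣ(Φ'(∂ᵣf)) ∂ₜf = -∫ (∂ₜf)² / Ψ(∂ᵣf)`.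
As `|∂ᵣf| ≤ L` for `t ≥ t₁`, the denominator is at most the maximum `M` of `ψ(-ξ, 1)` on the ball of
radius `L`, whence `∫_{t₁}^T ∫₀¹ (∂ₜf)² ≤ M (E(t₁) - E(T)) ≤ M E(t₁)` (`slice_bound`,
`energy_bound`; the time derivative of `E` is replaced there by Fubini's theorem). Letting `T → ∞`
(`setLIntegral_Ioi_le`) and identifying integrals over the unit cube of functions of the first
coordinate with integrals over `[0, 1]` (`measurePreserving_coord`) gives the claim.
-/

noncomputable section

/-- Append the value `1` as last coordinate: `aug N p = (p, 1) ∈ ℝ^{N+1}`. -/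
def aug (N : ℕ) (p : EuclideanSpace ℝ (Fin N)) : EuclideanSpace ℝ (Fin (N + 1)) :=
  (WithLp.equiv 2 (Fin (N + 1) → ℝ)).symm
    (Fin.snoc ((WithLp.equiv 2 (Fin N → ℝ)) p) (1 : ℝ))

/-- The anisotropic mean curvature operator of the graph of `u`:
`A_φ[u](x) = div (∇ₓφ(-∇u(x), 1))`, i.e. the divergence of the vector field
whose `i`-th component is the `i`-th partial derivative of `φ` at `(-∇u(x), 1)`. -/
def Aop (N : ℕ) (φ : EuclideanSpace ℝ (Fin (N + 1)) → ℝ)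
    (u : EuclideanSpace ℝ (Fin N) → ℝ) (x : EuclideanSpace ℝ (Fin N)) : ℝ :=
  ∑ i : Fin N,
    fderiv ℝ (fun y : EuclideanSpace ℝ (Fin N) =>
      gradient φ (aug N (-(gradient u y))) (Fin.castSucc i)) x (EuclideanSpace.single i 1)

/-- `φ` is a surface tension: nonnegative, convex, positively 1-homogeneous and
positive away from the origin. -/
def IsSurfaceTension (N : ℕ) (φ : EuclideanSpace ℝ (Fin (N + 1)) → ℝ) : Prop :=
  ConvexOn ℝ Set.univ φ ∧ (∀ p, 0 ≤ φ p) ∧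
    (∀ l : ℝ, 0 < l → ∀ p, φ (l • p) = l * φ p) ∧ (∀ p, p ≠ 0 → 0 < φ p)

/-- `u : ℝ^N × I → ℝ` is a classical solution of the anisotropic graphical flow
`∂ₜ u + ψ(-∇u, 1) · A_φ[u] = 0`: it is C² in space, C¹ in time, and satisfies the
equation pointwise. -/
def IsFlowSol (N : ℕ) (φ ψ : EuclideanSpace ℝ (Fin (N + 1)) → ℝ)
    (u : EuclideanSpace ℝ (Fin N) → ℝ → ℝ) (I : Set ℝ) : Prop :=
  (∀ t ∈ I, ContDiff ℝ 2 (fun x => u x t)) ∧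
  (∀ x, ContDiffOn ℝ 1 (fun s => u x s) I) ∧
  (∀ x, ∀ t ∈ I,
    deriv (fun s => u x s) t
      + ψ (aug N (-(gradient (fun y => u y t) x))) * Aop N φ (fun y => u y t) x = 0)

/-- The unit cube `[0,1]^N` in `ℝ^N`. -/
def unitCube (N : ℕ) : Set (EuclideanSpace ℝ (Fin N)) :=
  {x | ∀ i, x i ∈ Set.Icc (0 : ℝ) 1}

open Set MeasureTheory

/-! ### The energy estimate in one space dimension -/

/-- The partial derivatives `p = ∂ᵣf`, `q = ∂ₜf` and `h = ∂ᵣ∂ₜf` of a `C²` function on the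
half-plane `t > 0`; the same `h` is `∂ₜp` and `∂ᵣq`, by symmetry of second derivatives. -/
lemma exists_partials {f : ℝ → ℝ → ℝ}
    (hf : ContDiffOn ℝ 2 (Function.uncurry f) (univ ×ˢ Ioi 0)) :
    ∃ p q h : ℝ × ℝ → ℝ, ContDiffOn ℝ 1 p (univ ×ˢ Ioi 0) ∧ ContDiffOn ℝ 1 q (univ ×ˢ Ioi 0) ∧
      ContinuousOn h (univ ×ˢ Ioi 0) ∧
      ∀ r t : ℝ, 0 < t → HasDerivAt (fun s => f s t) (p (r, t)) r ∧
        HasDerivAt (fun s => f r s) (q (r, t)) t ∧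
        HasDerivAt (fun s => p (r, s)) (h (r, t)) t ∧
        HasDerivAt (fun s => q (s, t)) (h (r, t)) r := by
  have hU : IsOpen ((univ : Set ℝ) ×ˢ Ioi (0 : ℝ)) := isOpen_univ.prod isOpen_Ioi
  have hD : ContDiffOn ℝ 1 (fderiv ℝ (Function.uncurry f)) (univ ×ˢ Ioi 0) :=
    hf.fderiv_of_isOpen hU (by norm_num)
  have hp : ∀ v : ℝ × ℝ, ContDiffOn ℝ 1 (fun z => fderiv ℝ (Function.uncurry f) z v)
      (univ ×ˢ Ioi 0) := fun v => hD.clm_apply contDiffOn_const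
  have hD2 : ContinuousOn (fderiv ℝ (fderiv ℝ (Function.uncurry f))) (univ ×ˢ Ioi 0) :=
    hD.continuousOn_fderiv_of_isOpen hU le_rfl
  refine ⟨fun z => fderiv ℝ (Function.uncurry f) z (1, 0),
    fun z => fderiv ℝ (Function.uncurry f) z (0, 1),
    fun z => fderiv ℝ (fderiv ℝ (Function.uncurry f)) z (0, 1) (1, 0), hp _, hp _,
    (hD2.clm_apply continuousOn_const).clm_apply continuousOn_const, ?_⟩
  intro r t ht
  have hmem : (r, t) ∈ (univ : Set ℝ) ×ˢ Ioi (0 : ℝ) := ⟨mem_univ _, ht⟩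
  have hnh := hU.mem_nhds hmem
  have hr : HasDerivAt (fun s : ℝ => (s, t)) ((1 : ℝ), (0 : ℝ)) r :=
    (hasDerivAt_id r).prodMk (hasDerivAt_const r t)
  have ht' : HasDerivAt (fun s : ℝ => (r, s)) ((0 : ℝ), (1 : ℝ)) t :=
    (hasDerivAt_const t r).prodMk (hasDerivAt_id t)
  have h1 : HasFDerivAt (Function.uncurry f) _ (r, t) :=
    ((hf.contDiffAt hnh).differentiableAt (by norm_num)).hasFDerivAt
  have h2 : HasFDerivAt (fderiv ℝ (Function.uncurry f))
      (fderiv ℝ (fderiv ℝ (Function.uncurry f)) (r, t)) (r, t) :=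
    ((hD.contDiffAt hnh).differentiableAt (by norm_num)).hasFDerivAt
  have h3 : ∀ v : ℝ × ℝ, HasFDerivAt (fun z => fderiv ℝ (Function.uncurry f) z v)
      ((fderiv ℝ (fderiv ℝ (Function.uncurry f)) (r, t)).flip v) (r, t) := fun v => by
    have := h2.clm_apply (hasFDerivAt_const v (r, t))
    simpa using this
  have hsymm := (hf.contDiffAt hnh).isSymmSndFDerivAt (by simp)
  refine ⟨HasFDerivAt.comp_hasDerivAt (f := fun s : ℝ => (s, t)) r h1 hr,
    HasFDerivAt.comp_hasDerivAt (f := fun s : ℝ => (r, s)) t h1 ht',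
    HasFDerivAt.comp_hasDerivAt (f := fun s : ℝ => (r, s)) t (h3 (1, 0)) ht', ?_⟩
  have := HasFDerivAt.comp_hasDerivAt (f := fun s : ℝ => (s, t)) r (h3 (0, 1)) hr
  rw [ContinuousLinearMap.flip_apply, ← hsymm] at this
  exact this

/-- Replacing `t` by `max t t₁` extends a function from the half-plane `t ≥ t₁` to a continuous
function on the plane. -/
lemma continuous_clamp {p : ℝ × ℝ → ℝ} (hp : ContinuousOn p (univ ×ˢ Ioi 0)) {t₁ : ℝ}
    (ht₁ : 0 < t₁) : Continuous (fun z : ℝ × ℝ => p (z.1, max z.2 t₁)) :=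
  hp.comp_continuous (by fun_prop) fun z => ⟨mem_univ _, lt_of_lt_of_le ht₁ (le_max_right _ _)⟩

/-- The dissipation on a time slice. Here `a` stands for `Φ'(p)`, `w = ∂ᵣa` and `h = ∂ᵣq`:
multiplying the equation `q = Ψ(p) w` by `q` and integrating by parts over a period gives
`∫ q² ≤ M ∫ q w = -M ∫ h a`. -/
lemma slice_bound {p q h a w : ℝ → ℝ} {Ψ : ℝ → ℝ} {M : ℝ}
    (hq : Continuous q) (hh : Continuous h) (hw : Continuous w)
    (hqh : ∀ r, HasDerivAt q (h r) r) (haw : ∀ r, HasDerivAt a (w r) r)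
    (hq1 : q 1 = q 0) (ha1 : a 1 = a 0)
    (hΨ : ∀ s, 0 < Ψ s) (hM : ∀ r, Ψ (p r) ≤ M)
    (hpde : ∀ r, q r = Ψ (p r) * w r) :
    ∫ r in (0 : ℝ)..1, q r ^ 2 ≤ M * -∫ r in (0 : ℝ)..1, h r * a r := by
  have ibp := intervalIntegral.integral_mul_deriv_eq_deriv_mul (a := 0) (b := 1)
    (fun r _ => hqh r) (fun r _ => haw r) (hh.intervalIntegrable 0 1) (hw.intervalIntegrable 0 1)
  rw [hq1, ha1, sub_self, zero_sub] at ibp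
  rw [← ibp, ← intervalIntegral.integral_const_mul]
  refine intervalIntegral.integral_mono_on zero_le_one ((hq.pow 2).intervalIntegrable 0 1)
    ((continuous_const.mul (hq.mul hw)).intervalIntegrable 0 1) fun r _ => ?_
  -- `q` and `w` have the same sign, so `Ψ(p)` can be bounded by `M` in `q² = Ψ(p) q w`.
  have h1 : 0 ≤ q r * w r := by
    rw [hpde r, mul_assoc]
    exact mul_nonneg (hΨ _).le (mul_self_nonneg _)
  calc q r ^ 2 = Ψ (p r) * (q r * w r) := by rw [sq]; nth_rewrite 1 [hpde r]; ring
    _ ≤ M * (q r * w r) := mul_le_mul_of_nonneg_right (hM r) h1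

/-- The energy estimate on `[t₁, T]`: the slice bound is integrated in time, and since
`h Φ'(p) = ∂ₜ(Φ(p))`, Fubini's theorem turns the right-hand side into a difference of energies.
The time variable is replaced by `max t t₁`, which changes nothing on `[t₁, T]` and makes the
integrands continuous on the whole plane. -/
lemma energy_bound {p q h : ℝ × ℝ → ℝ} {Φ Ψ : ℝ → ℝ} {M t₁ : ℝ} (ht₁ : 0 < t₁)
    (hp : ContDiffOn ℝ 1 p (univ ×ˢ Ioi 0)) (hq : ContDiffOn ℝ 1 q (univ ×ˢ Ioi 0))
    (hh : ContinuousOn h (univ ×ˢ Ioi 0))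
    (hpt : ∀ r t : ℝ, 0 < t → HasDerivAt (fun s => p (r, s)) (h (r, t)) t)
    (hqr : ∀ r t : ℝ, 0 < t → HasDerivAt (fun s => q (s, t)) (h (r, t)) r)
    (hp1 : ∀ t, 0 < t → p (1, t) = p (0, t)) (hq1 : ∀ t, 0 < t → q (1, t) = q (0, t))
    (hΦ : ContDiff ℝ 2 Φ) (hΦ0 : ∀ s, 0 ≤ Φ s) (hΨ : ∀ s, 0 < Ψ s)
    (hM : ∀ r t, t₁ ≤ t → Ψ (p (r, t)) ≤ M)
    (hpde : ∀ r t, 0 < t → q (r, t) = Ψ (p (r, t)) * deriv (fun s => deriv Φ (p (s, t))) r)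
    (T : ℝ) (hT : t₁ ≤ T) :
    ∫ t in t₁..T, ∫ r in (0 : ℝ)..1, q (r, max t t₁) ^ 2
      ≤ M * ∫ r in (0 : ℝ)..1, Φ (p (r, t₁)) := by
  have hU : IsOpen ((univ : Set ℝ) ×ˢ Ioi (0 : ℝ)) := isOpen_univ.prod isOpen_Ioi
  have hΦ' : ContDiff ℝ 1 (deriv Φ) := ((contDiff_succ_iff_deriv (n := 1)).1 hΦ).2.2
  have ha : ContDiffOn ℝ 1 (fun z => deriv Φ (p z)) (univ ×ˢ Ioi 0) := hΦ'.comp_contDiffOn hp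
  have hslice : ∀ {g : ℝ × ℝ → ℝ}, ContinuousOn g (univ ×ˢ Ioi 0) → ∀ t : ℝ, 0 < t →
      Continuous fun r => g (r, t) := fun hg t ht =>
    hg.comp_continuous (by fun_prop) fun r => ⟨mem_univ _, ht⟩
  have haw : ∀ r t : ℝ, 0 < t → HasDerivAt (fun s => deriv Φ (p (s, t)))
      (fderiv ℝ (fun z => deriv Φ (p z)) (r, t) (1, 0)) r := fun r t ht =>
    HasFDerivAt.comp_hasDerivAt (f := fun s : ℝ => (s, t)) r
      ((ha.contDiffAt (hU.mem_nhds (show (r, t) ∈ _ from ⟨mem_univ _, ht⟩))).differentiableAt (by norm_num)).hasFDerivAt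
      ((hasDerivAt_id r).prodMk (hasDerivAt_const r t))
  have hw : ContinuousOn (fun z => fderiv ℝ (fun z => deriv Φ (p z)) z (1, 0))
      (univ ×ˢ Ioi 0) :=
    (ha.continuousOn_fderiv_of_isOpen hU le_rfl).clm_apply continuousOn_const
  have hpos : ∀ t, 0 < max t t₁ := fun t => lt_of_lt_of_le ht₁ (le_max_right _ _)
  have hM0 : 0 ≤ M := (hΨ _).le.trans (hM 0 t₁ le_rfl)
  have hcont : Continuous fun z : ℝ × ℝ => h (z.1, max z.2 t₁) * deriv Φ (p (z.1, max z.2 t₁)) :=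
    continuous_clamp (hh.mul ha.continuousOn) ht₁
  have hcont' : Continuous (Function.uncurry fun t r =>
      h (r, max t t₁) * deriv Φ (p (r, max t t₁))) := hcont.comp continuous_swap
  have hcq : Continuous (Function.uncurry fun t r => q (r, max t t₁) ^ 2) :=
    ((continuous_clamp hq.continuousOn ht₁).comp continuous_swap).pow 2
  have hΦp : ∀ t, 0 < t → Continuous fun r => Φ (p (r, t)) := fun t ht =>
    hΦ.continuous.comp (hslice hp.continuousOn t ht)
  have swap : ∫ t in t₁..T, ∫ r in (0 : ℝ)..1,
        h (r, max t t₁) * deriv Φ (p (r, max t t₁))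
      = ∫ r in (0 : ℝ)..1, ∫ t in t₁..T, h (r, max t t₁) * deriv Φ (p (r, max t t₁)) := by
    apply intervalIntegral_intervalIntegral_swap
    exact (hcont'.continuousOn.integrableOn_compact (isCompact_uIcc.prod isCompact_uIcc)).mono_set
      (prod_mono uIoc_subset_uIcc uIoc_subset_uIcc)
  have ftc : ∀ r, ∫ t in t₁..T, h (r, max t t₁) * deriv Φ (p (r, max t t₁))
      = Φ (p (r, T)) - Φ (p (r, t₁)) := fun r => by
    refine intervalIntegral.integral_eq_sub_of_hasDerivAt (f := fun t => Φ (p (r, t)))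
      (fun t ht => ?_) ((hcont.comp (continuous_const.prodMk continuous_id)).intervalIntegrable _ _)
    rw [uIcc_of_le hT] at ht
    rw [max_eq_left ht.1, mul_comm]
    exact HasDerivAt.comp t ((hΦ.differentiable (by norm_num)) _).hasDerivAt
      (hpt r t (ht₁.trans_le ht.1))
  calc ∫ t in t₁..T, ∫ r in (0 : ℝ)..1, q (r, max t t₁) ^ 2
      ≤ ∫ t in t₁..T, M * -∫ r in (0 : ℝ)..1, h (r, max t t₁) * deriv Φ (p (r, max t t₁)) := by
        refine intervalIntegral.integral_mono_on hT ?_ ?_ fun t _ => ?_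
        · exact (intervalIntegral.continuous_parametric_intervalIntegral_of_continuous'
            hcq 0 1).intervalIntegrable _ _
        · exact (continuous_const.mul
            (intervalIntegral.continuous_parametric_intervalIntegral_of_continuous'
            hcont' 0 1).neg).intervalIntegrable _ _
        · refine slice_bound (p := fun r => p (r, max t t₁)) (hslice hq.continuousOn _ (hpos t)) (hslice hh _ (hpos t))
            (hslice hw _ (hpos t)) (fun r => hqr r _ (hpos t)) (fun r => haw r _ (hpos t))
            (hq1 _ (hpos t)) (by rw [hp1 _ (hpos t)]) hΨ (fun r => hM r _ (le_max_right _ _))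
            fun r => ?_
          rw [hpde r _ (hpos t), (haw r _ (hpos t)).deriv]
    _ = M * ((∫ r in (0 : ℝ)..1, Φ (p (r, t₁))) - ∫ r in (0 : ℝ)..1, Φ (p (r, T))) := by
        rw [intervalIntegral.integral_const_mul, intervalIntegral.integral_neg, swap]
        simp_rw [ftc]
        rw [intervalIntegral.integral_sub ((hΦp T (ht₁.trans_le hT)).intervalIntegrable _ _)
          ((hΦp t₁ ht₁).intervalIntegrable _ _), neg_sub]
    _ ≤ M * ∫ r in (0 : ℝ)..1, Φ (p (r, t₁)) :=
        mul_le_mul_of_nonneg_left (sub_le_self _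
          (intervalIntegral.integral_nonneg zero_le_one fun r _ => hΦ0 _)) hM0

/-! ### Functions of the first coordinate -/

/-- The point `(-s e₁, 1)` of `ℝ^{N+1}`. -/
def ray (N : ℕ) [NeZero N] (s : ℝ) : EuclideanSpace ℝ (Fin (N + 1)) :=
  EuclideanSpace.single (Fin.last N) 1 - s • EuclideanSpace.single (Fin.castSucc 0) 1

lemma aug_neg_single (N : ℕ) [NeZero N] (s : ℝ) :
    aug N (-(EuclideanSpace.single 0 s)) = ray N s := by
  ext i
  refine Fin.lastCases ?_ (fun j => ?_) i
  · simp [aug, ray, NeZero.ne N]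
  · by_cases hj : j = 0
    · subst hj
      simp [aug, ray, NeZero.ne N]
    · simp [aug, ray, hj, (Fin.castSucc_lt_last j).ne]

lemma ray_ne_zero (N : ℕ) [NeZero N] (s : ℝ) : ray N s ≠ 0 := by
  intro h
  have := congrArg (fun v : EuclideanSpace ℝ (Fin (N + 1)) => v (Fin.last N)) h
  simp [ray, NeZero.ne N] at this

lemma contDiff_ray (N : ℕ) [NeZero N] : ContDiff ℝ 2 (ray N) := by
  unfold ray; fun_prop

lemma continuous_aug (N : ℕ) : Continuous (aug N) := by
  have : Continuous fun p : EuclideanSpace ℝ (Fin N) =>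
      (Fin.snoc (α := fun _ => ℝ) (WithLp.ofLp p) (1 : ℝ) : Fin (N + 1) → ℝ) := by
    refine continuous_pi fun i => ?_
    refine Fin.lastCases ?_ (fun j => ?_) i
    · simpa using continuous_const
    · simp only [Fin.snoc_castSucc]; fun_prop
  exact (PiLp.continuous_toLp 2 _).comp this

/-- The gradient of a function of the first coordinate is the derivative times `e₁`. -/
lemma gradient_coord (N : ℕ) [NeZero N] {g : ℝ → ℝ} (x : EuclideanSpace ℝ (Fin N)) {g' : ℝ}
    (hg : HasDerivAt g g' (x 0)) :
    gradient (fun y : EuclideanSpace ℝ (Fin N) => g (y 0)) x = EuclideanSpace.single 0 g' := by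
  have h1 : HasFDerivAt (fun y : EuclideanSpace ℝ (Fin N) => y 0)
      (EuclideanSpace.proj 0 : EuclideanSpace ℝ (Fin N) →L[ℝ] ℝ) x :=
    (EuclideanSpace.proj 0 : EuclideanSpace ℝ (Fin N) →L[ℝ] ℝ).hasFDerivAt
  refine HasGradientAt.gradient ?_
  rw [hasGradientAt_iff_hasFDerivAt]
  convert! HasDerivAt.comp_hasFDerivAt x hg h1 using 1
  ext v
  simp [EuclideanSpace.inner_single_left]

/-- For a function `g(x·e₁)` the anisotropic mean curvature is `-(Φ'(g'))'`, where
`Φ(s) = φ(-s e₁, 1)`: only the first term of the divergence survives, and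
`Φ'(s) = -∂₁φ(-s e₁, 1)`. -/
lemma Aop_coord (N : ℕ) [NeZero N] {φ : EuclideanSpace ℝ (Fin (N + 1)) → ℝ}
    (hφ : ContDiffOn ℝ 2 φ {(0 : EuclideanSpace ℝ (Fin (N + 1)))}ᶜ)
    {g p : ℝ → ℝ} (hg : ∀ r, HasDerivAt g (p r) r) (hp : Differentiable ℝ p)
    (x : EuclideanSpace ℝ (Fin N)) :
    Aop N φ (fun y => g (y 0)) x
      = -deriv (fun r => deriv (fun s => φ (ray N s)) (p r)) (x 0) := by
  have hO : IsOpen ({(0 : EuclideanSpace ℝ (Fin (N + 1)))}ᶜ) := isOpen_compl_singleton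
  have hgrad : ∀ z i, gradient φ z i = fderiv ℝ φ z (EuclideanSpace.single i 1) := fun z i => by
    rw [gradient, ← InnerProductSpace.toDual_symm_apply, EuclideanSpace.inner_single_right]
    simp
  have hΦ : ∀ s, deriv (fun s => φ (ray N s)) s
      = -fderiv ℝ φ (ray N s) (EuclideanSpace.single (Fin.castSucc 0) 1) := fun s => by
    have h1 : HasDerivAt (ray N) (-EuclideanSpace.single (Fin.castSucc 0) 1) s := by
      have := ((hasDerivAt_id s).smul_const
        (EuclideanSpace.single (Fin.castSucc (0 : Fin N)) (1 : ℝ))).const_sub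
        (EuclideanSpace.single (Fin.last N) (1 : ℝ))
      simpa using! this
    have h2 : HasFDerivAt φ (fderiv ℝ φ (ray N s)) (ray N s) :=
      ((hφ.contDiffAt (hO.mem_nhds (ray_ne_zero N s))).differentiableAt (by norm_num)).hasFDerivAt
    rw [← map_neg]
    exact (HasFDerivAt.comp_hasDerivAt (f := ray N) s h2 h1).deriv
  have hG : ∀ v, Differentiable ℝ fun r => fderiv ℝ φ (ray N (p r)) v := fun v r => by
    have h1 : DifferentiableAt ℝ (fderiv ℝ φ) (ray N (p r)) :=
      ((hφ.fderiv_of_isOpen (m := 1) hO (by norm_num)).contDiffAt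
        (hO.mem_nhds (ray_ne_zero N (p r)))).differentiableAt (by norm_num)
    have h2 : DifferentiableAt ℝ (fun r => ray N (p r)) r :=
      DifferentiableAt.comp (g := ray N) r ((contDiff_ray N).differentiable (by norm_num) _) (hp r)
    exact (DifferentiableAt.comp (g := fderiv ℝ φ) r h1 h2).clm_apply
      (differentiableAt_const _)
  have hterm : ∀ i : Fin N, fderiv ℝ (fun y : EuclideanSpace ℝ (Fin N) =>
      gradient φ (aug N (-(gradient (fun y : EuclideanSpace ℝ (Fin N) => g (y 0)) y)))
        (Fin.castSucc i)) x (EuclideanSpace.single i 1)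
      = deriv (fun r => fderiv ℝ φ (ray N (p r)) (EuclideanSpace.single (Fin.castSucc i) 1)) (x 0)
        * (EuclideanSpace.single i (1 : ℝ) : EuclideanSpace ℝ (Fin N)) 0 := fun i => by
    simp_rw [fun y : EuclideanSpace ℝ (Fin N) => gradient_coord N y (hg (y 0)),
      aug_neg_single, hgrad]
    have h1 : HasFDerivAt (fun y : EuclideanSpace ℝ (Fin N) => y 0)
        (EuclideanSpace.proj 0 : EuclideanSpace ℝ (Fin N) →L[ℝ] ℝ) x :=
      (EuclideanSpace.proj 0 : EuclideanSpace ℝ (Fin N) →L[ℝ] ℝ).hasFDerivAt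
    have h2 := HasDerivAt.comp_hasFDerivAt x
      (hG (EuclideanSpace.single (Fin.castSucc i) 1) (x 0)).hasDerivAt h1
    have h3 := h2.fderiv
    simp only [Function.comp_def] at h3
    rw [h3]
    simp
  unfold Aop
  rw [Finset.sum_congr rfl fun i _ => hterm i, Finset.sum_eq_single 0]
  · simp_rw [hΦ]
    simp
  · intro i _ hi
    simp [hi.symm]
  · simp

/-! ### Integrals over the unit cube and over half-lines -/

/-- The first coordinate pushes Lebesgue measure on the unit cube forward to Lebesgue measure on
`[0, 1]`, the cube being a product of probability spaces. -/
lemma measurePreserving_coord (N : ℕ) [NeZero N] :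
    MeasurePreserving (fun x : EuclideanSpace ℝ (Fin N) => x 0)
      (volume.restrict (unitCube N)) (volume.restrict (Icc (0 : ℝ) 1)) := by
  have h1 : MeasurePreserving (@WithLp.ofLp 2 (Fin N → ℝ)) (volume.restrict (unitCube N))
      (volume.restrict (univ.pi fun _ : Fin N => Icc (0 : ℝ) 1)) := by
    convert! (PiLp.volume_preserving_ofLp (Fin N)).restrict_preimage
      (MeasurableSet.univ_pi fun _ => measurableSet_Icc) using 2
    ext x
    simp [unitCube, Pi.le_def, forall_and]
  have : IsProbabilityMeasure ((volume : Measure ℝ).restrict (Icc (0 : ℝ) 1)) := ⟨by simp⟩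
  have h2 := measurePreserving_eval
    (μ := fun _ : Fin N => (volume : Measure ℝ).restrict (Icc (0 : ℝ) 1)) 0
  rw [← Measure.restrict_pi_pi] at h2
  exact h2.comp h1

lemma setLIntegral_unitCube (N : ℕ) [NeZero N] {g : ℝ → ℝ} (hg : Continuous g)
    (hg0 : ∀ r, 0 ≤ g r) :
    ∫⁻ x in unitCube N, ENNReal.ofReal (g (x 0)) = ENNReal.ofReal (∫ r in (0 : ℝ)..1, g r) := by
  rw [(measurePreserving_coord N).lintegral_comp (f := fun r => ENNReal.ofReal (g r))
    hg.measurable.ennreal_ofReal, intervalIntegral.integral_of_le zero_le_one,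
    ← integral_Icc_eq_integral_Ioc, ofReal_integral_eq_lintegral_ofReal
      hg.continuousOn.integrableOn_Icc (Filter.Eventually.of_forall hg0)]

lemma setIntegral_unitCube (N : ℕ) [NeZero N] {g : ℝ → ℝ} (hg : Continuous g) :
    ∫ x in unitCube N, g (x 0) = ∫ r in (0 : ℝ)..1, g r := by
  rw [intervalIntegral.integral_of_le zero_le_one, ← integral_Icc_eq_integral_Ioc,
    ← (measurePreserving_coord N).map_eq,
    integral_map (measurePreserving_coord N).measurable.aemeasurable
      hg.aestronglyMeasurable]

/-- A bound on all finite intervals `[a, T]` passes to `(a, ∞)` by monotone convergence. -/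
lemma setLIntegral_Ioi_le {D : ℝ → ℝ} (hD : Continuous D) (hD0 : ∀ t, 0 ≤ D t) {a B : ℝ}
    (hB : ∀ T, a ≤ T → ∫ t in a..T, D t ≤ B) :
    ∫⁻ t in Ioi a, ENNReal.ofReal (D t) ≤ ENNReal.ofReal B := by
  have hU : Ioi a = ⋃ n : ℕ, Ioc a (a + n) := by
    ext t
    simp only [mem_Ioi, mem_iUnion, mem_Ioc]
    refine ⟨fun ht => ?_, fun ⟨_, h, _⟩ => h⟩
    obtain ⟨n, hn⟩ := exists_nat_ge (t - a)
    exact ⟨n, ht, by linarith⟩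
  rw [hU, setLIntegral_iUnion_of_directed]
  · refine iSup_le fun n => ?_
    have hn : a ≤ a + n := by simp
    rw [← ofReal_integral_eq_lintegral_ofReal (hD.integrableOn_Ioc)
      (Filter.Eventually.of_forall hD0), ← intervalIntegral.integral_of_le hn]
    exact ENNReal.ofReal_le_ofReal (hB _ hn)
  · refine Monotone.directed_le fun m n hmn => Ioc_subset_Ioc_right ?_
    gcongr

/-! ### The dissipation bound -/

/-- For a 1-dimensional periodic classical solution
`u(x,t) = f(x·e₁,t)` of the anisotropic graphical flow with spatial gradient bounded by
`L` for `t ≥ t₁ > 0`, the total dissipation is finite: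
`∫_{t₁}^∞ ∫_{[0,1]^N} (∂ₜu)² dx dt ≤ (max_{|ξ|≤L} ψ(−ξ,1)) ∫_{[0,1]^N} φ(−∇u(·,t₁),1) dx`. -/
theorem dissipation_integral_bound (N : ℕ) [NeZero N]
    (φ ψ : EuclideanSpace ℝ (Fin (N + 1)) → ℝ)
    (hφ : IsSurfaceTension N φ)
    (hφC2 : ContDiffOn ℝ 2 φ {(0 : EuclideanSpace ℝ (Fin (N + 1)))}ᶜ)
    (hψcont : Continuous ψ) (hψpos : ∀ p, p ≠ 0 → 0 < ψ p)
    (f : ℝ → ℝ → ℝ)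
    (hper : ∀ (r t : ℝ) (k : ℤ), f (r + k) t = f r t)
    (hC2 : ContDiffOn ℝ 2
      (fun q : (EuclideanSpace ℝ (Fin N)) × ℝ => f (q.1 0) q.2)
      (Set.univ ×ˢ Set.Ioi 0))
    (hsol : IsFlowSol N φ ψ (fun x t => f (x 0) t) (Set.Ioi 0))
    (t₁ L : ℝ) (ht₁ : 0 < t₁) (hL : 0 < L)
    (hgrad : ∀ x : EuclideanSpace ℝ (Fin N), ∀ t ≥ t₁,
      ‖gradient (fun y : EuclideanSpace ℝ (Fin N) => f (y 0) t) x‖ ≤ L) :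
    ∫⁻ t in Set.Ioi t₁, ∫⁻ x in unitCube N,
        ENNReal.ofReal ((deriv (fun s => f (x 0) s) t) ^ 2)
      ≤ ENNReal.ofReal
          (sSup ((fun ξ : EuclideanSpace ℝ (Fin N) => ψ (aug N (-ξ))) '' {ξ | ‖ξ‖ ≤ L})
            * ∫ x in unitCube N,
                φ (aug N (-(gradient (fun y : EuclideanSpace ℝ (Fin N) => f (y 0) t₁) x)))) := by
  have hf2 : ContDiffOn ℝ 2 (Function.uncurry f) (univ ×ˢ Ioi 0) := by
    have hι : ContDiff ℝ 2 fun z : ℝ × ℝ =>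
        ((z.1 • EuclideanSpace.single 0 1 : EuclideanSpace ℝ (Fin N)), z.2) := by fun_prop
    refine (hC2.comp hι.contDiffOn fun z hz => ⟨mem_univ _, hz.2⟩).congr fun z _ => ?_
    simp [Function.uncurry]
  obtain ⟨p, q, h, hp, hq, hh, hder⟩ := exists_partials hf2
  have hgr : ∀ t, 0 < t → ∀ x : EuclideanSpace ℝ (Fin N),
      gradient (fun y : EuclideanSpace ℝ (Fin N) => f (y 0) t) x
        = EuclideanSpace.single 0 (p (x 0, t)) :=
    fun t ht x => gradient_coord N x (hder (x 0) t ht).1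
  have hcoord : ∀ r : ℝ, (EuclideanSpace.single 0 r : EuclideanSpace ℝ (Fin N)) 0 = r := by simp
  have hM : ∀ r t, t₁ ≤ t → ψ (ray N (p (r, t))) ≤
      sSup ((fun ξ : EuclideanSpace ℝ (Fin N) => ψ (aug N (-ξ))) '' {ξ | ‖ξ‖ ≤ L}) := by
    intro r t ht
    refine le_csSup ?_ ⟨EuclideanSpace.single 0 (p (r, t)), ?_, ?_⟩
    · have hK : IsCompact {ξ : EuclideanSpace ℝ (Fin N) | ‖ξ‖ ≤ L} := by
        simpa [Metric.closedBall, dist_zero_right] using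
          isCompact_closedBall (0 : EuclideanSpace ℝ (Fin N)) L
      exact (hK.image (hψcont.comp ((continuous_aug N).comp continuous_neg))).bddAbove
    · have := hgrad (EuclideanSpace.single 0 r) t ht
      rwa [hgr t (ht₁.trans_le ht), hcoord] at this
    · simp only [aug_neg_single]
  have hΦ : ContDiff ℝ 2 fun s => φ (ray N s) :=
    hφC2.comp_contDiff (contDiff_ray N) fun s => ray_ne_zero N s
  have hpde : ∀ r t, 0 < t → q (r, t)
      = ψ (ray N (p (r, t))) * deriv (fun s => deriv (fun s => φ (ray N s)) (p (s, t))) r := by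
    intro r t ht
    have hpd : Differentiable ℝ fun s => p (s, t) :=
      (contDiffOn_univ.1 (hp.comp (f := fun s : ℝ => (s, t))
        (contDiff_id.prodMk contDiff_const).contDiffOn
        fun s _ => ⟨mem_univ _, ht⟩)).differentiable (by norm_num)
    have := hsol.2.2 (EuclideanSpace.single 0 r) t ht
    rw [hgr t ht, Aop_coord N hφC2 (g := fun s => f s t) (fun s => (hder s t ht).1) hpd,
      aug_neg_single] at this
    simp only [hcoord] at this
    rw [(hder r t ht).2.1.deriv] at this
    linarith
  -- Periodicity of `f` passes to both partial derivatives.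
  have hf1 : ∀ r t, f (r + 1) t = f r t := fun r t => by simpa using hper r t 1
  have hp1 : ∀ t, 0 < t → p (1, t) = p (0, t) := fun t ht => by
    have h1 := HasDerivAt.comp_add_const (f := fun s => f s t) 0 1
      (by simpa using (hder 1 t ht).1)
    simp_rw [hf1] at h1
    exact h1.unique (hder 0 t ht).1
  have hq1 : ∀ t, 0 < t → q (1, t) = q (0, t) := fun t ht => by
    have h1 := (hder 1 t ht).2.1
    have h2 : (fun s => f 1 s) = fun s => f 0 s := funext fun s => by simpa using hf1 0 s
    rw [h2] at h1
    exact h1.unique (hder 0 t ht).2.1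
  have hbound := energy_bound (Ψ := fun s => ψ (ray N s)) ht₁ hp hq hh
    (fun r t ht => (hder r t ht).2.2.1) (fun r t ht => (hder r t ht).2.2.2) hp1 hq1 hΦ
    (fun s => hφ.2.1 _) (fun s => hψpos _ (ray_ne_zero N s)) hM hpde
  have hcq : Continuous (Function.uncurry fun t r => q (r, max t t₁) ^ 2) :=
    ((continuous_clamp hq.continuousOn ht₁).comp continuous_swap).pow 2
  have hrhs : ∫ x in unitCube N,
        φ (aug N (-(gradient (fun y : EuclideanSpace ℝ (Fin N) => f (y 0) t₁) x)))
      = ∫ r in (0 : ℝ)..1, φ (ray N (p (r, t₁))) := by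
    simp_rw [hgr t₁ ht₁, aug_neg_single]
    exact setIntegral_unitCube N (g := fun r => φ (ray N (p (r, t₁))))
      (hΦ.continuous.comp (hp.continuousOn.comp_continuous (by fun_prop)
        fun r => ⟨mem_univ _, ht₁⟩))
  rw [hrhs]
  refine le_trans (le_of_eq (setLIntegral_congr_fun measurableSet_Ioi fun t ht => ?_))
    (setLIntegral_Ioi_le
      (intervalIntegral.continuous_parametric_intervalIntegral_of_continuous' hcq 0 1)
      (fun t => intervalIntegral.integral_nonneg zero_le_one fun r _ => sq_nonneg _) hbound)
  have ht' : t₁ < t := ht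
  simp only
  rw [← setLIntegral_unitCube N (g := fun r => q (r, max t t₁) ^ 2)
    (hcq.comp (continuous_const.prodMk continuous_id)) fun r => sq_nonneg _]
  simp_rw [max_eq_left ht'.le, fun x : EuclideanSpace ℝ (Fin N) =>
    (hder (x 0) t (ht₁.trans ht')).2.1.deriv]

end
end

section
/- Let N ≥ 1, let φ: ℝ^{N+1} → [0,∞) be a surface tension of class C² on ℝ^{N+1}\{0} with φ² uniformly convex, and let ψ: ℝ^{N+1} → [0,∞) be continuous with ψ(p) > 0 for p ≠ 0. Let f: ℝ × (0,∞) → ℝ be such that for each t > 0 the function f(·,t) is ℤ-periodic and odd (f(−r,t) = −f(r,t)), let u(x,t) := f(x·e₁,t), and assume that u is of class C² on ℝ^N × (0,∞), is a classical solution of the anisotropic graphical flow ∂_t u + ψ(−∇u,1)·A_φ[u] = 0, and that there is M > 0 with ‖f(·,t)‖_{C²(ℝ)} ≤ M for all t ≥ 1. Then sup_{r ∈ ℝ} |f(r,t)| → 0 as t → +∞, i.e. u(·,t) → 0 uniformly on ℝ^N. -/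
/-!
For `u(x,t) = f(x·e₁,t)` the flow reduces to the scalar equation `f_t = a(f_r) f_rr` with
`a(c) = ψ(-c e₁, 1) g''(c)` and `g(c) = φ(-c e₁, 1)` (`Aop_oneDim`). Strong convexity of `φ²`,
together with the 1-homogeneity of `φ`, forces `g'' > 0` (`slice_deriv2_pos`). Since `|f_r| ≤ M` for
`t ≥ 1`, compactness of `[-M, M]` gives `a(f_r) ≥ κ > 0`.

Oddness and periodicity make `f` vanish at `r = 0` and `r = 1/2`. On `[0, 1/2]` the function
`2M exp(-κ(t-1)) (1 - r²)` is a strict supersolution of the linear equation `w_t = a(f_r) w_rr` and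
dominates `±f` on the parabolic boundary, so by the maximum principle (`le_barrier`) it dominates
`|f|`. Hence `f` decays exponentially, uniformly in `r`.
-/

noncomputable section

open Filter Topology Set

/-! ### The maximum principle -/

lemma deriv2_nonneg_of_isLocalMin {h : ℝ → ℝ} {x : ℝ} (hc : Continuous h)
    (hmin : IsLocalMin h x) : 0 ≤ deriv (deriv h) x := by
  by_contra! hneg
  -- A negative second derivative would make `x` a local maximum too, so `h` would be locally
  -- constant and its second derivative zero.
  have hmax : IsLocalMax h x :=
    isLocalMax_of_deriv_deriv_neg hneg hmin.deriv_eq_zero hc.continuousAt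
  have heq : h =ᶠ[𝓝 x] fun _ => h x := by
    filter_upwards [hmin, hmax] with y h1 h2 using le_antisymm h2 h1
  have := heq.deriv.deriv_eq
  simp at this
  linarith

/-- One-sided first-order condition: only times up to `t` are compared, since the maximum in the
parabolic argument may sit at the final time. -/
lemma deriv_nonneg_of_left_max {h : ℝ → ℝ} {a t : ℝ} (hat : a < t) (hd : DifferentiableAt ℝ h t)
    (hmax : ∀ s ∈ Icc a t, h s ≤ h t) : 0 ≤ deriv h t := by
  have h1 := (hd.hasDerivAt.hasDerivWithinAt (s := Iio t))
  rw [hasDerivWithinAt_iff_tendsto_slope' (by simp)] at h1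
  refine ge_of_tendsto h1 ?_
  filter_upwards [Ioo_mem_nhdsLT hat] with s hs
  rw [slope_def_field]
  exact div_nonneg_of_nonpos (by linarith [hmax s ⟨hs.1.le, hs.2.le⟩]) (by linarith [hs.2])

/-- A solution of `g_t = b g_rr` with `b ≥ κ`, vanishing at `r = 0` and `r = 1/2` and at most `M` at
time `1`, stays below the supersolution `2M exp(-κ(t-1)) (1 - r²)`. -/
lemma le_barrier (g : ℝ → ℝ → ℝ) {M κ : ℝ} (hM : 0 < M) (hκ : 0 < κ)
    (hcont : ContinuousOn (fun q : ℝ × ℝ => g q.1 q.2) (univ ×ˢ Ioi 0))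
    (hspace : ∀ t ≥ (1 : ℝ), ContDiff ℝ 2 (fun r => g r t))
    (htime : ∀ r, ∀ t ≥ (1 : ℝ), DifferentiableAt ℝ (g r) t)
    (heq : ∀ r, ∀ t ≥ (1 : ℝ), ∃ b ≥ κ,
      deriv (g r) t = b * deriv (deriv (fun s => g s t)) r)
    (h0 : ∀ t, g 0 t = 0) (h1 : ∀ t, g (1 / 2) t = 0) (hinit : ∀ r, g r 1 ≤ M)
    {t : ℝ} (ht : 1 ≤ t) {r : ℝ} (hr : r ∈ Icc (0 : ℝ) (1 / 2)) :
    g r t ≤ 2 * M * Real.exp (-κ * (t - 1)) := by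
  set h : ℝ → ℝ → ℝ := fun r t => g r t - 2 * M * Real.exp (-κ * (t - 1)) * (1 - r ^ 2) with hh
  obtain ⟨⟨r₀, t₀⟩, ⟨hr₀, ht₀⟩, hmax⟩ :=
    (isCompact_Icc.prod isCompact_Icc : IsCompact (Icc (0 : ℝ) (1 / 2) ×ˢ Icc 1 t)).exists_isMaxOn
      ⟨(r, t), hr, ht, le_rfl⟩ (f := fun q : ℝ × ℝ => h q.1 q.2) (by
        refine ContinuousOn.sub (hcont.mono ?_) (by fun_prop)
        rintro ⟨x, s⟩ ⟨-, hs⟩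
        exact ⟨trivial, lt_of_lt_of_le one_pos hs.1⟩)
  have hmax' : ∀ x ∈ Icc (0 : ℝ) (1 / 2), ∀ s ∈ Icc 1 t, h x s ≤ h r₀ t₀ :=
    fun x hx s hs => hmax (show (x, s) ∈ _ from ⟨hx, hs⟩)
  set E := 2 * M * Real.exp (-κ * (t₀ - 1)) with hE
  have hEpos : 0 < E := by positivity
  simp only [mem_Icc] at hr₀ ht₀ hr
  suffices hle : h r₀ t₀ ≤ 0 by
    have h2 := (hmax' r hr t ⟨ht, le_rfl⟩).trans hle
    have h3 : 0 < 2 * M * Real.exp (-κ * (t - 1)) := by positivity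
    simp only [hh] at h2
    nlinarith [sq_nonneg r]
  -- A positive maximum of `h` cannot lie on the parabolic boundary, where the barrier exceeds `g`;
  -- at an interior point, `h_rr ≤ 0 ≤ h_t` contradicts the equation.
  by_contra! hpos
  have hgpos : E * (1 - r₀ ^ 2) < g r₀ t₀ := by simpa [hh, hE] using hpos
  have hq : 0 < E * (1 - r₀ ^ 2) := mul_pos hEpos (by nlinarith)
  have hr0 : 0 < r₀ := by
    rcases hr₀.1.eq_or_lt with h | h
    · rw [← h, h0] at hgpos; rw [← h] at hq; linarith
    · exact h
  have hr1 : r₀ < 1 / 2 := by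
    rcases hr₀.2.eq_or_lt with h | h
    · rw [h, h1] at hgpos; rw [h] at hq; linarith
    · exact h
  have ht1 : 1 < t₀ := by
    rcases ht₀.1.eq_or_lt with h | h
    · have := hinit r₀
      rw [hE, ← h] at hgpos
      simp only [sub_self, mul_zero, Real.exp_zero] at hgpos
      nlinarith [mul_nonneg hM.le (show 0 ≤ 1 / 4 - r₀ ^ 2 by nlinarith)]
    · exact h
  have hC := hspace t₀ ht1.le
  have hd1 : Differentiable ℝ (fun s => g s t₀) := hC.differentiable (by norm_num)
  have hd2 : Differentiable ℝ (deriv (fun s => g s t₀)) :=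
    ((contDiff_succ_iff_deriv (n := 1)).1 hC).2.2.differentiable (by norm_num)
  have hspc : 0 ≤ deriv (deriv (fun x => -h x t₀)) r₀ := by
    apply deriv2_nonneg_of_isLocalMin
    · have := hd1.continuous
      simp only [hh]; fun_prop
    · filter_upwards [Icc_mem_nhds hr0 hr1] with x hx
      exact neg_le_neg (hmax' x hx t₀ ht₀)
  have hder1 : deriv (fun x => -h x t₀) = fun x => -(deriv (fun s => g s t₀) x) - 2 * E * x := by
    funext x
    have := ((hd1 x).hasDerivAt.sub
      ((((hasDerivAt_id x).pow 2).const_sub 1).const_mul E)).neg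
    refine (this.congr_deriv ?_).deriv
    simp; ring
  have hder2 : deriv (deriv (fun x => -h x t₀)) r₀
      = -(deriv (deriv (fun s => g s t₀)) r₀) - 2 * E := by
    rw [hder1]
    have := (hd2 r₀).hasDerivAt.neg.sub ((hasDerivAt_id r₀).const_mul (2 * E))
    refine (this.congr_deriv ?_).deriv
    simp
  have htm : 0 ≤ deriv (h r₀) t₀ := by
    have hdt := htime r₀ t₀ ht1.le
    refine deriv_nonneg_of_left_max ht1 ?_ fun s hs => hmax' r₀ hr₀ s ⟨hs.1, hs.2.trans ht₀.2⟩
    simp only [hh]; fun_prop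
  have hdert : deriv (h r₀) t₀ = deriv (g r₀) t₀ + κ * E * (1 - r₀ ^ 2) := by
    have := (htime r₀ t₀ ht1.le).hasDerivAt.sub
      ((((((hasDerivAt_id t₀).sub_const 1).const_mul (-κ)).exp).const_mul (2 * M)).mul_const
        (1 - r₀ ^ 2))
    refine (this.congr_deriv ?_).deriv
    simp only [id, hE]; ring
  obtain ⟨b, hb, hbe⟩ := heq r₀ t₀ ht1.le
  rw [hdert, hbe] at htm
  rw [hder2] at hspc
  have e1 : b * deriv (deriv (fun s => g s t₀)) r₀ ≤ b * (-2 * E) :=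
    mul_le_mul_of_nonneg_left (by linarith) (hκ.le.trans hb)
  have e2 : κ * E ≤ b * E := mul_le_mul_of_nonneg_right hb hEpos.le
  have e3 : 0 < κ * E := by positivity
  nlinarith [mul_nonneg e3.le (sq_nonneg r₀)]

/-! ### The section of the surface tension in the direction of the profile -/

lemma aug_slope (N : ℕ) [NeZero N] (c : ℝ) :
    aug N (-(c • EuclideanSpace.single (0 : Fin N) (1 : ℝ)))
      = EuclideanSpace.single (Fin.last N) 1 - c • EuclideanSpace.single (Fin.castSucc 0) 1 := by
  ext j
  refine Fin.lastCases ?_ (fun j => ?_) j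
  · simp [aug, NeZero.ne N]
  · have : Fin.castSucc j ≠ Fin.last N := (Fin.castSucc_lt_last j).ne
    simp [aug, Pi.single_apply]

lemma aug_ne_zero (N : ℕ) (p : EuclideanSpace ℝ (Fin N)) : aug N p ≠ 0 := by
  intro h
  have := congrArg (fun q => q (Fin.last N)) h
  simp [aug] at this

/-- The covector `(-c e₁, 1) ∈ ℝ^{N+1}` at which `φ` and `ψ` are evaluated when the gradient of `u`
is `c e₁`. -/
def slopePt (N : ℕ) [NeZero N] (c : ℝ) : EuclideanSpace ℝ (Fin (N + 1)) :=
  aug N (-(c • EuclideanSpace.single (0 : Fin N) (1 : ℝ)))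

lemma slopePt_ne_zero (N : ℕ) [NeZero N] (c : ℝ) : slopePt N c ≠ 0 := aug_ne_zero _ _

lemma contDiff_slopePt (N : ℕ) [NeZero N] : ContDiff ℝ 2 (slopePt N) := by
  have : slopePt N = fun c => EuclideanSpace.single (Fin.last N) (1 : ℝ)
      - c • EuclideanSpace.single (Fin.castSucc 0) 1 := funext (aug_slope N)
  rw [this]
  fun_prop

lemma hasDerivAt_slopePt (N : ℕ) [NeZero N] (c : ℝ) :
    HasDerivAt (slopePt N) (-EuclideanSpace.single (Fin.castSucc 0) 1) c := by
  have : slopePt N = fun c => EuclideanSpace.single (Fin.last N) (1 : ℝ)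
      - c • EuclideanSpace.single (Fin.castSucc 0) 1 := funext (aug_slope N)
  rw [this]
  simpa using ((hasDerivAt_id c).smul_const
    (EuclideanSpace.single (Fin.castSucc (0 : Fin N)) (1 : ℝ))).const_sub
      (EuclideanSpace.single (Fin.last N) (1 : ℝ))

lemma norm_sq_slopePt (N : ℕ) [NeZero N] (a b p q : ℝ) :
    ‖a • slopePt N p - b • slopePt N q‖ ^ 2 = (a * p - b * q) ^ 2 + (a - b) ^ 2 := by
  have h : a • slopePt N p - b • slopePt N q = EuclideanSpace.single (Fin.last N) (a - b)
      - EuclideanSpace.single (Fin.castSucc 0) (a * p - b * q) := by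
    simp only [slopePt, aug_slope]
    ext j
    simp
    split_ifs <;> ring
  rw [h, EuclideanSpace.norm_sq_eq, Fin.sum_univ_castSucc, Finset.sum_eq_single 0]
  · simp [NeZero.ne N]
    ring
  · intro j _ hj
    have : Fin.castSucc j ≠ Fin.last N := (Fin.castSucc_lt_last j).ne
    simp [this, hj]
  · simp

/-- The section `c ↦ φ(-c e₁, 1)`; its second derivative is the coefficient `∂₁₁φ(-c e₁, 1)`. -/
def slice (N : ℕ) [NeZero N] (φ : EuclideanSpace ℝ (Fin (N + 1)) → ℝ) (c : ℝ) : ℝ :=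
  φ (slopePt N c)

section slice
variable {N : ℕ} [NeZero N] {φ : EuclideanSpace ℝ (Fin (N + 1)) → ℝ}

lemma contDiff_slice (hφ : ContDiffOn ℝ 2 φ {0}ᶜ) : ContDiff ℝ 2 (slice N φ) :=
  contDiffOn_univ.1 (hφ.comp (contDiff_slopePt N).contDiffOn fun c _ => slopePt_ne_zero N c)

/-- Quantitative midpoint convexity of the section. The points `P± = slopePt (p ± s)`, rescaled to the
unit level set of `φ`, have the convex combination `2 P / (g(p+s) + g(p-s))` with
`P = slopePt p` and `g = slice N φ`, so strong convexity of `φ²` and homogeneity of `φ` give the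
bound. -/
lemma slice_ineq (hφ : IsSurfaceTension N φ) {m : ℝ} (hm : 0 < m)
    (hunif : StrongConvexOn univ m fun p => φ p ^ 2) (p s : ℝ) :
    4 * slice N φ p ^ 2 + 2 * m / (1 + p ^ 2) * s ^ 2
      ≤ (slice N φ (p + s) + slice N φ (p - s)) ^ 2 := by
  obtain ⟨-, -, hhom, hpos⟩ := hφ
  have hg : ∀ c, 0 < slice N φ c := fun c => hpos _ (slopePt_ne_zero N c)
  set A := slice N φ (p + s) with hA
  set B := slice N φ (p - s) with hB
  have hA0 : 0 < A := hg _
  have hB0 : 0 < B := hg _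
  have hun := hunif.2
  have key := hun (mem_univ (A⁻¹ • slopePt N (p + s))) (mem_univ (B⁻¹ • slopePt N (p - s)))
    (a := A / (A + B)) (b := B / (A + B)) (by positivity) (by positivity) (by field_simp)
  have hcomb : (A / (A + B)) • A⁻¹ • slopePt N (p + s) + (B / (A + B)) • B⁻¹ • slopePt N (p - s)
      = (2 / (A + B)) • slopePt N p := by
    simp only [slopePt, aug_slope]
    match_scalars <;> field_simp <;> ring
  have e1 : φ (A⁻¹ • slopePt N (p + s)) = 1 := by
    rw [hhom _ (by positivity)]; exact inv_mul_cancel₀ hA0.ne'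
  have e2 : φ (B⁻¹ • slopePt N (p - s)) = 1 := by
    rw [hhom _ (by positivity)]; exact inv_mul_cancel₀ hB0.ne'
  simp only [hcomb, e1, e2, norm_sq_slopePt] at key
  rw [hhom _ (by positivity), show φ (slopePt N p) = slice N φ p from rfl] at key
  set G := slice N φ p
  have hdist : s ^ 2 * (A⁻¹ + B⁻¹) ^ 2 / (1 + p ^ 2)
      ≤ (A⁻¹ * (p + s) - B⁻¹ * (p - s)) ^ 2 + (A⁻¹ - B⁻¹) ^ 2 := by
    -- The right side is a quadratic in `A⁻¹ - B⁻¹`; the left side is its minimum.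
    rw [div_le_iff₀ (by positivity)]
    nlinarith [sq_nonneg ((A⁻¹ - B⁻¹) * (1 + p ^ 2) + p * s * (A⁻¹ + B⁻¹))]
  have h2 : A / (A + B) * (B / (A + B)) * (m / 2 * (s ^ 2 * (A⁻¹ + B⁻¹) ^ 2 / (1 + p ^ 2)))
      ≤ A / (A + B) * (B / (A + B)) *
        (m / 2 * ((A⁻¹ * (p + s) - B⁻¹ * (p - s)) ^ 2 + (A⁻¹ - B⁻¹) ^ 2)) := by gcongr
  have h3 : A / (A + B) * (B / (A + B)) * (m / 2 * (s ^ 2 * (A⁻¹ + B⁻¹) ^ 2 / (1 + p ^ 2)))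
      = m * s ^ 2 / (2 * (1 + p ^ 2)) / (A * B) := by
    field_simp; ring
  have h4 : m * s ^ 2 / (2 * (1 + p ^ 2)) * (4 / (A + B) ^ 2)
      ≤ m * s ^ 2 / (2 * (1 + p ^ 2)) / (A * B) := by
    rw [div_eq_mul_inv _ (A * B)]
    gcongr
    rw [div_le_iff₀ (by positivity), inv_mul_eq_div, le_div_iff₀ (by positivity)]
    nlinarith [sq_nonneg (A - B)]
  have h5 : (2 / (A + B) * G) ^ 2 + m * s ^ 2 / (2 * (1 + p ^ 2)) * (4 / (A + B) ^ 2) ≤ 1 := by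
    have e3 : A / (A + B) + B / (A + B) = 1 := by field_simp
    simp only [smul_eq_mul, one_pow, mul_one] at key
    linarith
  have h6 := mul_le_mul_of_nonneg_right h5 (sq_nonneg (A + B))
  have e4 : ((2 / (A + B) * G) ^ 2 + m * s ^ 2 / (2 * (1 + p ^ 2)) * (4 / (A + B) ^ 2))
      * (A + B) ^ 2 = 4 * G ^ 2 + 2 * m / (1 + p ^ 2) * s ^ 2 := by
    field_simp; ring
  linarith

/-- By `slice_ineq`, `(g(p+s) + g(p-s))² - 2m/(1+p²) s²` with `g = slice N φ` is minimal at `s = 0`,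
so its second derivative there, `8 g g'' - 4m/(1+p²)`, is nonnegative. -/
lemma slice_deriv2_pos (hφ : IsSurfaceTension N φ) (hφC2 : ContDiffOn ℝ 2 φ {0}ᶜ)
    {m : ℝ} (hm : 0 < m) (hunif : StrongConvexOn univ m fun p => φ p ^ 2) (p : ℝ) :
    0 < deriv (deriv (slice N φ)) p := by
  have hC := contDiff_slice hφC2
  have hG : 0 < slice N φ p := hφ.2.2.2 _ (slopePt_ne_zero N p)
  have hd1 : Differentiable ℝ (slice N φ) := hC.differentiable (by norm_num)
  have hd2 : Differentiable ℝ (deriv (slice N φ)) :=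
    ((contDiff_succ_iff_deriv (n := 1)).1 hC).2.2.differentiable (by norm_num)
  set K := 2 * m / (1 + p ^ 2) with hK
  have hKpos : 0 < K := by positivity
  set D : ℝ → ℝ := fun s => (slice N φ (p + s) + slice N φ (p - s)) ^ 2 - K * s ^ 2 with hD
  have hmin : IsLocalMin D 0 := by
    refine Eventually.of_forall fun s => ?_
    have := slice_ineq hφ hm hunif p s
    simp only [hD, add_zero, sub_zero]
    linarith
  have hcont : Continuous D := by
    have := hC.continuous
    simp only [hD]; fun_prop
  have h2 := deriv2_nonneg_of_isLocalMin hcont hmin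
  have hS : ∀ s, HasDerivAt (fun s => slice N φ (p + s) + slice N φ (p - s))
      (deriv (slice N φ) (p + s) - deriv (slice N φ) (p - s)) s := fun s =>
    ((hd1 (p + s)).hasDerivAt.comp_const_add p s).add
      ((hd1 (p - s)).hasDerivAt.comp_const_sub p s)
  have hS' : ∀ s, HasDerivAt (fun s => deriv (slice N φ) (p + s) - deriv (slice N φ) (p - s))
      (deriv (deriv (slice N φ)) (p + s) + deriv (deriv (slice N φ)) (p - s)) s := fun s =>
    (((hd2 (p + s)).hasDerivAt.comp_const_add p s).sub
      ((hd2 (p - s)).hasDerivAt.comp_const_sub p s)).congr_deriv (sub_neg_eq_add _ _)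
  have hD1 : deriv D = fun s => 2 * (slice N φ (p + s) + slice N φ (p - s)) *
      (deriv (slice N φ) (p + s) - deriv (slice N φ) (p - s)) - 2 * K * s := by
    funext s
    refine (((((hS s).pow 2).sub (((hasDerivAt_id s).pow 2).const_mul K))).congr_deriv ?_).deriv
    simp; ring
  have hD2 : deriv (deriv D) 0 = 8 * slice N φ p * deriv (deriv (slice N φ)) p - 2 * K := by
    rw [hD1]
    refine (((((hS 0).const_mul 2).mul (hS' 0)).sub
      ((hasDerivAt_id (0 : ℝ)).const_mul (2 * K))).congr_deriv ?_).deriv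
    simp; ring
  rw [hD2] at h2
  by_contra! hneg
  nlinarith [mul_nonneg hG.le (neg_nonneg.2 hneg)]

/-! ### The curvature operator on one-dimensional profiles -/

lemma gradient_coord_s16 {n : ℕ} (u : EuclideanSpace ℝ (Fin n) → ℝ) (P : EuclideanSpace ℝ (Fin n))
    (i : Fin n) : gradient u P i = fderiv ℝ u P (EuclideanSpace.single i 1) := by
  rw [← toDual_gradient, InnerProductSpace.toDual_apply_apply,
    EuclideanSpace.inner_single_right]
  simp

lemma gradient_oneDim {v : ℝ → ℝ} (hv : Differentiable ℝ v) (y : EuclideanSpace ℝ (Fin N)) :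
    gradient (fun x : EuclideanSpace ℝ (Fin N) => v (x 0)) y
      = deriv v (y 0) • EuclideanSpace.single 0 1 := by
  have h := (hv (y 0)).hasDerivAt.comp_hasFDerivAt y
    (EuclideanSpace.proj (𝕜 := ℝ) (0 : Fin N)).hasFDerivAt
  ext i
  rw [gradient_coord_s16]
  have h' : HasFDerivAt (fun x : EuclideanSpace ℝ (Fin N) => v (x 0)) _ y := h
  rw [h'.fderiv]
  simp [eq_comm]

/-- Only the first term of the divergence survives, because the vector field depends on `y` only
through `y 0`; its first component is `-g'(v')` with `g = slice N φ`. -/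
lemma Aop_oneDim (hφC2 : ContDiffOn ℝ 2 φ {0}ᶜ) {v : ℝ → ℝ} (hv : ContDiff ℝ 2 v)
    (x : EuclideanSpace ℝ (Fin N)) :
    Aop N φ (fun y => v (y 0)) x
      = -(deriv (deriv (slice N φ)) (deriv v (x 0)) * deriv (deriv v) (x 0)) := by
  have hv1 : Differentiable ℝ v := hv.differentiable (by norm_num)
  have hv2 : Differentiable ℝ (deriv v) :=
    ((contDiff_succ_iff_deriv (n := 1)).1 hv).2.2.differentiable (by norm_num)
  have hopen : IsOpen ({0}ᶜ : Set (EuclideanSpace ℝ (Fin (N + 1)))) := isOpen_compl_singleton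
  have hdφ : ∀ P ≠ 0, DifferentiableAt ℝ φ P := fun P hP =>
    (hφC2.contDiffAt (hopen.mem_nhds hP)).differentiableAt (by norm_num)
  have hdφ' : ∀ P ≠ 0, DifferentiableAt ℝ (fderiv ℝ φ) P := fun P hP =>
    ((hφC2.contDiffAt (hopen.mem_nhds hP)).fderiv_right (m := 1) (by norm_num)).differentiableAt
      (by norm_num)
  have hsd : deriv (slice N φ)
      = fun c => -fderiv ℝ φ (slopePt N c) (EuclideanSpace.single (Fin.castSucc 0) 1) := by
    funext c
    have := (hdφ _ (slopePt_ne_zero N c)).hasFDerivAt.comp_hasDerivAt c (hasDerivAt_slopePt N c)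
    have h' : HasDerivAt (slice N φ) _ c := this
    rw [h'.deriv, map_neg]
  have hK : ∀ i : Fin N, Differentiable ℝ fun r =>
      fderiv ℝ φ (slopePt N (deriv v r)) (EuclideanSpace.single (Fin.castSucc i) 1) := by
    intro i r
    have h1 : DifferentiableAt ℝ (fun r => slopePt N (deriv v r)) r :=
      (hasDerivAt_slopePt N _).differentiableAt.comp r (hv2 r)
    have h2 : DifferentiableAt ℝ (fun r => fderiv ℝ φ (slopePt N (deriv v r))) r :=
      (hdφ' _ (slopePt_ne_zero N _)).comp (f := fun r => slopePt N (deriv v r)) r h1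
    exact h2.clm_apply (differentiableAt_const _)
  have hterm : ∀ i : Fin N, fderiv ℝ (fun y : EuclideanSpace ℝ (Fin N) =>
      gradient φ (aug N (-(gradient (fun z : EuclideanSpace ℝ (Fin N) => v (z 0)) y)))
        (Fin.castSucc i)) x (EuclideanSpace.single i 1)
      = deriv (fun r => fderiv ℝ φ (slopePt N (deriv v r))
          (EuclideanSpace.single (Fin.castSucc i) 1)) (x 0)
        * (EuclideanSpace.single i (1 : ℝ) : EuclideanSpace ℝ (Fin N)) 0 := by
    intro i
    simp only [gradient_oneDim hv1, gradient_coord_s16]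
    have := (hK i (x 0)).hasDerivAt.comp_hasFDerivAt x
      (EuclideanSpace.proj (𝕜 := ℝ) (0 : Fin N)).hasFDerivAt
    have h' : HasFDerivAt (fun y : EuclideanSpace ℝ (Fin N) =>
      fderiv ℝ φ (aug N (-(deriv v (y 0) • EuclideanSpace.single 0 1)))
        (EuclideanSpace.single (Fin.castSucc i) 1)) _ x := this
    rw [h'.fderiv]
    simp
  have hC := contDiff_slice hφC2
  have hd2 : Differentiable ℝ (deriv (slice N φ)) :=
    ((contDiff_succ_iff_deriv (n := 1)).1 hC).2.2.differentiable (by norm_num)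
  have hchain := ((hd2 (deriv v (x 0))).hasDerivAt.comp (x 0) (hv2 (x 0)).hasDerivAt).neg
  have hfun : (fun r => fderiv ℝ φ (slopePt N (deriv v r))
      (EuclideanSpace.single (Fin.castSucc 0) 1)) = -(deriv (slice N φ) ∘ deriv v) := by
    funext r
    simp [hsd]
  rw [Aop, Finset.sum_congr rfl fun i _ => hterm i, Finset.sum_eq_single 0]
  · rw [hfun, hchain.deriv]; simp
  · intro i _ hi
    simp [hi.symm]
  · simp

end slice

/-! ### Decay of the profile -/

/-- Let `φ` be a `C²` surface tension with `φ²` uniformly convex and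
`ψ` a continuous mobility, positive off the origin. Let `u(x,t) = f(x·e₁,t)` be a
1-dimensional, `ℤ`-periodic and odd (in space) classical solution of the anisotropic
graphical flow, with uniformly bounded `C²` norm for `t ≥ 1`. Then `u(·,t) → 0`
uniformly as `t → +∞`. -/
theorem periodic_odd_solution_flattens (N : ℕ) [NeZero N]
    (φ ψ : EuclideanSpace ℝ (Fin (N + 1)) → ℝ)
    (hφ : IsSurfaceTension N φ)
    (hφC2 : ContDiffOn ℝ 2 φ {(0 : EuclideanSpace ℝ (Fin (N + 1)))}ᶜ)
    (hunif : ∃ m > (0 : ℝ), StrongConvexOn Set.univ m (fun p => (φ p) ^ 2))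
    (hψcont : Continuous ψ) (hψpos : ∀ p, p ≠ 0 → 0 < ψ p)
    (f : ℝ → ℝ → ℝ)
    (hper : ∀ (r t : ℝ) (k : ℤ), f (r + k) t = f r t)
    (hodd : ∀ r t : ℝ, f (-r) t = -f r t)
    (hC2 : ContDiffOn ℝ 2
      (fun q : (EuclideanSpace ℝ (Fin N)) × ℝ => f (q.1 0) q.2)
      (Set.univ ×ˢ Set.Ioi 0))
    (hsol : IsFlowSol N φ ψ (fun x t => f (x 0) t) (Set.Ioi 0))
    (M : ℝ) (hM : 0 < M)
    (hbound : ∀ t ≥ (1 : ℝ), ∀ r : ℝ,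
      |f r t| + |deriv (fun s => f s t) r| + |deriv (deriv (fun s => f s t)) r| ≤ M) :
    ∀ ε > (0 : ℝ), ∃ T : ℝ, ∀ t ≥ T, ∀ r : ℝ, |f r t| ≤ ε := by
  have hslice : ContDiff ℝ 2 (slice N φ) := contDiff_slice hφC2
  obtain ⟨m, hm, hconv⟩ := hunif
  obtain ⟨κ, hκ, hκle⟩ : ∃ κ > 0, ∀ q ∈ Set.Icc (-M) M,
      κ ≤ ψ (slopePt N q) * deriv (deriv (slice N φ)) q := by
    have hc : Continuous fun q => ψ (slopePt N q) * deriv (deriv (slice N φ)) q :=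
      (hψcont.comp (contDiff_slopePt N).continuous).mul
        ((contDiff_succ_iff_deriv (n := 1)).1 hslice).2.2.continuous_deriv_one
    obtain ⟨q, -, hq⟩ := (isCompact_Icc (a := -M) (b := M)).exists_isMinOn
      ⟨0, by simp [hM.le]⟩ hc.continuousOn
    exact ⟨_, mul_pos (hψpos _ (slopePt_ne_zero N q)) (slice_deriv2_pos hφ hφC2 hm hconv q), hq⟩
  obtain ⟨hsp, htm, hpde⟩ := hsol
  have hcoord : ∀ r : ℝ, (r • EuclideanSpace.single (0 : Fin N) (1 : ℝ)) 0 = r := by simp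
  have hspace : ∀ t > (0 : ℝ), ContDiff ℝ 2 fun r => f r t := fun t ht => by
    have := (hsp t ht).comp (contDiff_id.smul contDiff_const :
      ContDiff ℝ 2 fun r : ℝ => r • EuclideanSpace.single (0 : Fin N) (1 : ℝ))
    simpa [Function.comp_def] using this
  have htime : ∀ r, ∀ t > (0 : ℝ), DifferentiableAt ℝ (f r) t := fun r t ht => by
    have := ((htm (r • EuclideanSpace.single 0 1)).differentiableOn (by norm_num)).differentiableAt
      (Ioi_mem_nhds ht)
    simpa using this
  have hcont : ContinuousOn (fun q : ℝ × ℝ => f q.1 q.2) (Set.univ ×ˢ Set.Ioi 0) := by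
    have := hC2.continuousOn.comp
      (f := fun q : ℝ × ℝ => (q.1 • EuclideanSpace.single (0 : Fin N) (1 : ℝ), q.2))
      (s := Set.univ ×ˢ Set.Ioi 0) (by fun_prop) (fun q hq => ⟨trivial, hq.2⟩)
    simpa [Function.comp_def] using this
  have heq : ∀ r, ∀ t ≥ (1 : ℝ), ∃ b ≥ κ,
      deriv (f r) t = b * deriv (deriv (fun s => f s t)) r := fun r t ht => by
    have ht0 : 0 < t := by linarith
    have h := hpde (r • EuclideanSpace.single 0 1) t ht0
    rw [Aop_oneDim hφC2 (hspace t ht0),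
      gradient_oneDim ((hspace t ht0).differentiable (by norm_num))] at h
    simp only [hcoord] at h
    have hb := hbound t ht r
    refine ⟨_, hκle (deriv (fun s => f s t) r) (abs_le.1 ?_), ?_⟩
    · linarith [abs_nonneg (f r t), abs_nonneg (deriv (deriv (fun s => f s t)) r)]
    · simp only [slopePt]
      linarith
  have hf0 : ∀ t, f 0 t = 0 := fun t => by
    have := hodd 0 t
    rw [neg_zero] at this
    linarith
  -- Oddness and periodicity also pin the profile at the half-integers.
  have hf1 : ∀ t, f (1 / 2) t = 0 := fun t => by
    have h1 := hodd (1 / 2) t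
    have h2 := hper (-(1 / 2)) t 1
    norm_num at h1 h2 ⊢
    linarith
  have hinit : ∀ r, |f r 1| ≤ M := fun r => by
    linarith [hbound 1 le_rfl r, abs_nonneg (deriv (fun s => f s 1) r),
      abs_nonneg (deriv (deriv (fun s => f s 1)) r)]
  -- The barrier bound applies to `-f` as well, which solves the same linear equation with the
  -- coefficient frozen along `f`.
  have hhalf : ∀ t ≥ (1 : ℝ), ∀ r ∈ Set.Icc (0 : ℝ) (1 / 2),
      |f r t| ≤ 2 * M * Real.exp (-κ * (t - 1)) := fun t ht r hr => by
    refine abs_le'.2 ⟨le_barrier f hM hκ hcont (fun t ht => hspace t (by linarith))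
      (fun r t ht => htime r t (by linarith)) heq hf0 hf1 (fun r => (abs_le.1 (hinit r)).2) ht hr,
      le_barrier (fun r t => -f r t) hM hκ hcont.neg (fun t ht => (hspace t (by linarith)).neg)
      (fun r t ht => (htime r t (by linarith)).neg) (fun r t ht => ?_) (by simp [hf0])
      (fun t => by rw [hf1, neg_zero]) (fun r => (abs_le'.1 (hinit r)).2) ht hr⟩
    obtain ⟨b, hb, h⟩ := heq r t ht
    refine ⟨b, hb, ?_⟩
    have e1 : deriv (fun s => -f s t) = fun s => -deriv (fun s => f s t) s :=
      funext fun s => deriv.fun_neg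
    rw [e1, deriv.fun_neg, deriv.fun_neg, h, mul_neg]
  have hall : ∀ t ≥ (1 : ℝ), ∀ r, |f r t| ≤ 2 * M * Real.exp (-κ * (t - 1)) := fun t ht r => by
    have h1 : f r t = f (r - round r) t := by
      have := hper (r - round r) t (round r)
      rwa [sub_add_cancel] at this
    have h2 : |f (r - round r) t| = |f |r - round r| t| := by
      rcases abs_choice (r - round r) with h | h <;> rw [h]
      rw [hodd, abs_neg]
    rw [h1, h2]
    exact hhalf t ht _ ⟨abs_nonneg _, abs_sub_round r⟩
  intro ε hε
  have hlim : Tendsto (fun t : ℝ => 2 * M * Real.exp (-κ * (t - 1))) atTop (𝓝 0) := by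
    have h1 : Tendsto (fun t : ℝ => κ * (t - 1)) atTop atTop :=
      (tendsto_atTop_add_const_right _ (-1) tendsto_id).const_mul_atTop hκ
    have h2 := (Real.tendsto_exp_neg_atTop_nhds_zero.comp h1).const_mul (2 * M)
    simpa [Function.comp_def] using h2
  obtain ⟨T, hT⟩ := eventually_atTop.1
    ((hlim.eventually (ge_mem_nhds hε)).and (eventually_ge_atTop 1))
  exact ⟨T, fun t ht r => (hall t (hT t ht).2 r).trans (hT t ht).1⟩

end
end
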